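/- Let M ≥ 0, N ≥ 1, ℓ ∈ ℂ^N, k ∈ I_{M,N}, r ∈ {1,…,N}, x ∈ ℂ^M and t ∈ ℂ^N. At every point where all factors occurring in the denominators of w_k(x;t), of w_k(x;t+τe_r), and of the right-hand side are nonzero, one has w_k(x; t + τ e_r) = (∏_{i=1}^M [sinh(t_r + x_i − ℓ_r η + τ) · sinh(t_r − x_i − ℓ_r η + τ)] / [sinh(t_r + x_i + ℓ_r η + τ) · sinh(t_r − x_i + ℓ_r η + τ)]) · w_k(x; t), where e_r is the r-th standard basis vector of ℂ^N. -/

import Mathlib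

open Complex MeasureTheory

noncomputable section

namespace BQKZ

/-- `(z;p)_∞ = ∏_{m ≥ 0} (1 - z pᵐ)`; used with `p = q²`. -/
def poch (p z : ℂ) : ℂ := ∏' m : ℕ, (1 - z * p ^ m)

/-- renormalized Jacobi theta `θ(z) = (z;p)_∞ (p z⁻¹;p)_∞`, with `p = q²`. -/
def theta (p z : ℂ) : ℂ := poch p z * poch p (p * z⁻¹)

/-- `q² = e^{2τ}` where `q = e^τ`. -/
def qsq (τ : ℂ) : ℂ := exp (2 * τ)

/-- `ξ̃₊ = ξ₊ - η/2 - τ/2`. -/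
def xiP (τ η ξp : ℂ) : ℂ := ξp - η / 2 - τ / 2

/-- `ξ̃₋ = ξ₋ - η/2`. -/
def xiM (η ξm : ℂ) : ℂ := ξm - η / 2

/-- `n_k(r) = #{i : k i = r}`. -/
def nk {M N : ℕ} (k : Fin M → Fin N) (r : Fin N) : ℕ :=
  (Finset.univ.filter fun i => k i = r).card

/-- `φ_{k;r}`. -/
def phiC (η ξp ξm : ℂ) {N M : ℕ} (ℓ : Fin N → ℂ) (k : Fin M → Fin N) (r : Fin N) : ℂ :=
  (∏ i ∈ Finset.univ.filter fun i : Fin M => k i = r,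
      exp (2 * (η - ξp - ξm) +
        4 * ((M : ℂ) - ((i : ℕ) + 1) - ∑ s ∈ Finset.univ.filter fun s : Fin N => r ≤ s, ℓ s) * η)) *
    exp (-4 * ℓ r * η * ((Finset.univ.filter fun i : Fin M => r < k i).card : ℂ))

/-- `Φ_k(t)`. -/
def PhiF (τ η ξp ξm : ℂ) {N M : ℕ} (ℓ : Fin N → ℂ) (k : Fin M → Fin N) (t : Fin N → ℂ) : ℂ :=
  ∏ r, theta (qsq τ) (exp (2 * t r)) / theta (qsq τ) (phiC η ξp ξm ℓ k r * exp (2 * t r))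

/-- `F(x;t)`. -/
def Ffun (τ η : ℂ) {N : ℕ} (ℓ : Fin N → ℂ) (x : ℂ) (t : Fin N → ℂ) : ℂ :=
  ∏ s, (poch (qsq τ) (exp (-2 * (t s + x - ℓ s * η))) * poch (qsq τ) (exp (-2 * (t s - x - ℓ s * η)))) /
       (poch (qsq τ) (exp (-2 * (t s + x + ℓ s * η))) * poch (qsq τ) (exp (-2 * (t s - x + ℓ s * η))))

/-- `g(x)`. -/
def gfun (τ η ξp ξm : ℂ) (x : ℂ) : ℂ :=
  (poch (qsq τ) (qsq τ * exp (2 * (xiP τ η ξp - x))) * poch (qsq τ) (qsq τ * exp (2 * (xiM η ξm - x)))) /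
  (poch (qsq τ) (exp (2 * (-xiP τ η ξp - x))) * poch (qsq τ) (exp (2 * (-xiM η ξm - x))))

/-- `h(x)`. -/
def hfun (τ η : ℂ) (x : ℂ) : ℂ :=
  (1 - exp (-2 * x)) * poch (qsq τ) (qsq τ * exp (-2 * (x + η))) / poch (qsq τ) (exp (-2 * (x - η)))

/-- `ψ_{k;i}`. -/
def psiC (τ η ξp ξm : ℂ) {N M : ℕ} (ℓ : Fin N → ℂ) (k : Fin M → Fin N) (i : Fin M) : ℂ :=
  xiP τ η ξp + xiM η ξm + τ + ℓ (k i) * η +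
    2 * ((∑ s ∈ Finset.univ.filter fun s : Fin N => k i < s, ℓ s) - (M : ℂ) + ((i : ℕ) + 1)) * η

/-- `u_{k;i}(x;t)`. -/
def ufun (τ η ξp ξm : ℂ) {N M : ℕ} (ℓ : Fin N → ℂ) (k : Fin M → Fin N) (i : Fin M) (x : ℂ)
    (t : Fin N → ℂ) : ℂ :=
  exp (-t (k i)) * theta (qsq τ) (exp (2 * (x - t (k i) + psiC τ η ξp ξm ℓ k i))) *
    (∏ s ∈ Finset.univ.filter fun s : Fin N => k i < s,
      theta (qsq τ) (exp (2 * (x - t s - ℓ s * η)))) /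
    ∏ s ∈ Finset.univ.filter fun s : Fin N => k i ≤ s,
      theta (qsq τ) (exp (2 * (x - t s + ℓ s * η)))

/-- `w_k(x;t)/Φ_k(t)` (the weight function with the `Φ_k` prefactor cancelled). -/
def w0 (τ η ξp ξm : ℂ) {N M : ℕ} (ℓ : Fin N → ℂ) (k : Fin M → Fin N) (x : Fin M → ℂ)
    (t : Fin N → ℂ) : ℂ :=
  (∏ i, Ffun τ η ℓ (x i) t * gfun τ η ξp ξm (x i) * ufun τ η ξp ξm ℓ k i (x i) t) *
    ∏ p ∈ Finset.univ.filter fun p : Fin M × Fin M => p.1 < p.2,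
      hfun τ η (x p.1 + x p.2) * hfun τ η (x p.1 - x p.2)

/-- the weight function `w_k(x;t)`. -/
def wfun (τ η ξp ξm : ℂ) {N M : ℕ} (ℓ : Fin N → ℂ) (k : Fin M → Fin N) (x : Fin M → ℂ)
    (t : Fin N → ℂ) : ℂ :=
  PhiF τ η ξp ξm ℓ k t * w0 τ η ξp ξm ℓ k x t

/-- sign `ε_i = ±1` encoded by a boolean. -/
def sg {M : ℕ} (ε : Fin M → Bool) (i : Fin M) : ℂ := if ε i then 1 else -1

/-- `S_M k`: rearrangements of `k`. -/
def rearr {M N : ℕ} (k : Fin M → Fin N) : Finset (Fin M → Fin N) :=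
  Finset.univ.filter fun m => ∀ r, nk m r = nk k r

/-- `β_k(x;t)`, the coefficients of the boundary Bethe vectors. -/
def betaF (η ξm : ℂ) {N M : ℕ} (ℓ : Fin N → ℂ) (k : Fin M → Fin N) (x : Fin M → ℂ)
    (t : Fin N → ℂ) : ℂ :=
  exp ((∑ i, ((nk k (k i) : ℂ) / 2 - ℓ (k i))) * η) *
    ∑ m ∈ rearr k, ∑ ε : Fin M → Bool,
      (∏ i,
          sg ε i * sinh (sg ε i * x i - xiM η ξm) / sinh (t (m i) + sg ε i * x i - ℓ (m i) * η) *
            (∏ s ∈ Finset.univ.filter fun s : Fin N => m i < s,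
              sinh (t s + sg ε i * x i + ℓ s * η) / sinh (t s + sg ε i * x i - ℓ s * η)) *
            ∏ s, sinh (t s - sg ε i * x i + ℓ s * η) / sinh (t s - sg ε i * x i - ℓ s * η)) *
        (∏ p ∈ Finset.univ.filter fun p : Fin M × Fin M => p.1 < p.2,
          sinh (sg ε p.1 * x p.1 + sg ε p.2 * x p.2 + η) /
            sinh (sg ε p.1 * x p.1 + sg ε p.2 * x p.2)) *
        ∏ p ∈ Finset.univ.filter fun p : Fin M × Fin M => m p.1 < m p.2,
          sinh (sg ε p.1 * x p.1 - sg ε p.2 * x p.2 - η) /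
            sinh (sg ε p.1 * x p.1 - sg ε p.2 * x p.2)

/-- `(ℓ,η) ∈ D^k_{M,N}`. -/
def Dmn (η : ℂ) {N M : ℕ} (ℓ : Fin N → ℂ) (k : Fin M → Fin N) : Prop :=
  ∀ r, (ℓ r * η).re > max 0 (((nk k r : ℝ) - 1) / 2 * η.re)

/-- the (0-based) position `i_k(s;r) = ∑_{s' < r} n_k(s') + s`. -/
def blockIdx {M N : ℕ} (k : Fin M → Fin N) (r : Fin N) (s : ℕ) : ℕ :=
  (∑ s' ∈ Finset.univ.filter fun s' : Fin N => s' < r, nk k s') + s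

/-- `γ ∈ Γ^k_{M,N}`. -/
def Gam (η : ℂ) {N M : ℕ} (ℓ : Fin N → ℂ) (k : Fin M → Fin N) (γ : Fin M → ℂ) : Prop :=
  (∀ i, -(ℓ (k i) * η).re < (γ i).re ∧ (γ i).re < (ℓ (k i) * η).re) ∧
    ∀ r : Fin N, ∀ s : ℕ, s + 1 < nk k r →
      ∀ (h1 : blockIdx k r s < M) (h2 : blockIdx k r (s + 1) < M),
        (γ ⟨blockIdx k r (s + 1), h2⟩).re ≤ (γ ⟨blockIdx k r s, h1⟩).re ∧
          (γ ⟨blockIdx k r (s + 1), h2⟩).re + η.re < (γ ⟨blockIdx k r s, h1⟩).re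

/-- `γ ∈ Γ^k_{M,N;τ}`. -/
def GamTau (τ η : ℂ) {N M : ℕ} (ℓ : Fin N → ℂ) (k : Fin M → Fin N) (γ : Fin M → ℂ) : Prop :=
  Gam η ℓ k γ ∧
    (∀ i, -(ℓ (k i) * η + τ).re < (γ i).re ∧ (γ i).re < (ℓ (k i) * η + τ).re) ∧
    ∀ r : Fin N, ∀ s : ℕ, s + 1 < nk k r →
      ∀ (h1 : blockIdx k r s < M) (h2 : blockIdx k r (s + 1) < M),
        (γ ⟨blockIdx k r (s + 1), h2⟩).re + (η - τ).re < (γ ⟨blockIdx k r s, h1⟩).re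

/-- `Λ₊ = max_s Re(ℓ_s η)`. -/
def Lam (η : ℂ) {N : ℕ} (ℓ : Fin N → ℂ) : ℝ := ⨆ s, (ℓ s * η).re

/-- the sector `Ã`. -/
def Atil (τ η ξp ξm : ℂ) {N : ℕ} (ℓ : Fin N → ℂ) : Set (Fin N → ℂ) :=
  {t | (∀ i j : Fin N, (j : ℕ) = (i : ℕ) + 1 → (t i - t j).re > 2 * Lam η ℓ + max η.re 0) ∧
       ∀ i : Fin N, (i : ℕ) = N - 1 →
         (t i).re > Lam η ℓ + max (max (η / 2).re 0) (max (-xiP τ η ξp).re (-xiM η ξm).re)}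

/-- the sector `Ã_τ`. -/
def AtilTau (τ η ξp ξm : ℂ) {N : ℕ} (ℓ : Fin N → ℂ) : Set (Fin N → ℂ) :=
  {t | (∀ i j : Fin N, (j : ℕ) = (i : ℕ) + 1 →
          (t i - t j).re > 2 * Lam η ℓ + max η.re 0 - τ.re) ∧
       ∀ i : Fin N, (i : ℕ) = N - 1 →
         (t i).re > Lam η ℓ + max (max (η / 2).re 0) (max (-xiP τ η ξp).re (-xiM η ξm).re) - τ.re}

/-- the cone `Q₊ ⊂ ℤ^N` spanned by the simple roots `e_i - e_{i+1}` and `e_N`. -/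
def Qplus {N : ℕ} : Set (Fin N → ℤ) :=
  {α | ∃ β : Fin N → ℕ, ∀ j : Fin N,
    α j = (β j : ℤ) -
      if _h : 0 < (j : ℕ) then
        (β ⟨(j : ℕ) - 1, lt_of_le_of_lt (Nat.sub_le _ _) j.isLt⟩ : ℤ)
      else 0}

/-- the cube `[0,π]^M` over which the contour integrals are iterated. -/
def box (M : ℕ) : Set (Fin M → ℝ) := Set.univ.pi fun _ => Set.Icc (0 : ℝ) Real.pi

/-- the point of the contour `C^γ_k(t)` with parameters `s ∈ [0,π]^M`. -/
def cpt {M N : ℕ} (k : Fin M → Fin N) (γ : Fin M → ℂ) (t : Fin N → ℂ) (s : Fin M → ℝ) :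
    Fin M → ℂ := fun i => t (k i) + γ i + (s i : ℂ) * I

/-- the iterated contour integral over `C^γ_k(t)`. -/
def contourIntegral {M N : ℕ} (k : Fin M → Fin N) (γ : Fin M → ℂ) (t : Fin N → ℂ)
    (f : (Fin M → ℂ) → ℂ) : ℂ :=
  I ^ M * ∫ s in box M, f (cpt k γ t s)

/-- nonvanishing of all denominators occurring in `w_k(x;t)/Φ_k(t)`. -/
def w0DenomOK (τ η ξp ξm : ℂ) {N M : ℕ} (ℓ : Fin N → ℂ) (k : Fin M → Fin N) (x : Fin M → ℂ)
    (t : Fin N → ℂ) : Prop :=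
  (∀ s : Fin N, ∀ i : Fin M,
      poch (qsq τ) (exp (-2 * (t s + x i + ℓ s * η))) ≠ 0 ∧
      poch (qsq τ) (exp (-2 * (t s - x i + ℓ s * η))) ≠ 0) ∧
  (∀ i : Fin M,
      poch (qsq τ) (exp (2 * (-xiP τ η ξp - x i))) ≠ 0 ∧
      poch (qsq τ) (exp (2 * (-xiM η ξm - x i))) ≠ 0) ∧
  (∀ i : Fin M, ∀ s : Fin N, k i ≤ s → theta (qsq τ) (exp (2 * (x i - t s + ℓ s * η))) ≠ 0) ∧
  ∀ i j : Fin M, i < j →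
      poch (qsq τ) (exp (-2 * (x i + x j - η))) ≠ 0 ∧
      poch (qsq τ) (exp (-2 * (x i - x j - η))) ≠ 0

/-- nonvanishing of the theta denominators of `Φ_k(t)`. -/
def PhiDenomOK (τ η ξp ξm : ℂ) {N M : ℕ} (ℓ : Fin N → ℂ) (k : Fin M → Fin N)
    (t : Fin N → ℂ) : Prop :=
  ∀ r, theta (qsq τ) (phiC η ξp ξm ℓ k r * exp (2 * t r)) ≠ 0

/-- nonvanishing of all sinh denominators occurring in `β_m(x;t)` (for any rearrangement `m`). -/
def betaDenomOK (η : ℂ) {N M : ℕ} (ℓ : Fin N → ℂ) (x : Fin M → ℂ) (t : Fin N → ℂ) : Prop :=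
  (∀ s : Fin N, ∀ i : Fin M,
      sinh (t s + x i - ℓ s * η) ≠ 0 ∧ sinh (t s - x i - ℓ s * η) ≠ 0) ∧
  ∀ i j : Fin M, i < j → sinh (x i + x j) ≠ 0 ∧ sinh (x i - x j) ≠ 0

lemma poch_step (p z : ℂ) (hp : ‖p‖ < 1) : poch p z = (1 - z) * poch p (p * z) := by
  unfold poch
  have hm : ∀ w : ℂ, Multipliable fun m : ℕ => (1 - w * p ^ m) := by
    intro w
    have h := multipliable_one_add_of_summable (f := fun m : ℕ => -(w * p ^ m)) (by
      simp only [norm_neg, norm_mul, norm_pow]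
      exact (summable_geometric_of_lt_one (norm_nonneg _) hp).mul_left _)
    simpa [sub_eq_add_neg] using h
  have e : (fun m : ℕ => 1 - p * z * p ^ m) = fun m : ℕ => 1 - z * p ^ (m + 1) := by
    funext m; ring
  have h2 := hm (p * z)
  rw [e] at h2
  rw [e, tprod_eq_zero_mul' (f := fun m : ℕ => 1 - z * p ^ m) h2]
  simp

lemma theta_step (p z : ℂ) (hp : ‖p‖ < 1) (hp0 : p ≠ 0) (hz : z ≠ 0) :
    theta p (p * z) = -z⁻¹ * theta p z := by
  unfold theta
  have e : p * (p * z)⁻¹ = z⁻¹ := by field_simp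
  rw [e, poch_step p z hp, poch_step p z⁻¹ hp]
  field_simp
  ring

lemma norm_qsq (τ : ℂ) (hτ : τ.re < 0) : ‖qsq τ‖ < 1 := by
  unfold qsq
  rw [Complex.norm_exp]
  have h : (2 * τ).re < 0 := by simp; linarith
  simpa using h

/-- theta at an exponential whose exponent is shifted down by `2τ`. -/
lemma theta_down (τ y : ℂ) (hτ : τ.re < 0) :
    theta (qsq τ) (exp (2 * (y - τ))) = -exp (2 * (y - τ)) * theta (qsq τ) (exp (2 * y)) := by
  have h := theta_step (qsq τ) (exp (2 * (y - τ))) (norm_qsq τ hτ) (exp_ne_zero _) (exp_ne_zero _)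
  have e : qsq τ * exp (2 * (y - τ)) = exp (2 * y) := by
    unfold qsq; rw [← exp_add]; ring_nf
  rw [e] at h
  rw [h]
  have := exp_ne_zero (2 * (y - τ))
  field_simp

lemma poch_down (τ y : ℂ) (hτ : τ.re < 0) :
    poch (qsq τ) (exp (-2 * (y + τ))) =
      2 * exp (-(y + τ)) * sinh (y + τ) * poch (qsq τ) (exp (-2 * y)) := by
  rw [poch_step _ _ (norm_qsq τ hτ)]
  have e : qsq τ * exp (-2 * (y + τ)) = exp (-2 * y) := by
    unfold qsq; rw [← exp_add]; ring_nf
  rw [e]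
  congr 1
  have h1 : exp (-2 * (y + τ)) = exp (-(y + τ)) * exp (-(y + τ)) := by
    rw [← exp_add]; ring_nf
  have h2 : exp (y + τ) * exp (-(y + τ)) = 1 := by
    rw [← exp_add]; simp
  rw [h1, Complex.sinh]
  linear_combination -h2

lemma prod_shift {N : ℕ} (S : Finset (Fin N)) (r : Fin N) (A B : Fin N → ℂ) (c : ℂ)
    (h : ∀ s, s ≠ r → A s = B s) (hr : A r = c * B r) :
    ∏ s ∈ S, A s = (if r ∈ S then c else 1) * ∏ s ∈ S, B s := by
  have h' : ∀ s ∈ S, A s = (if s = r then c else 1) * B s := by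
    intro s _
    by_cases e : s = r
    · subst e; simp [hr]
    · simp [e, h s e]
  rw [Finset.prod_congr rfl h', Finset.prod_mul_distrib, Finset.prod_ite_eq']

lemma phi_shift (τ η ξp ξm : ℂ) (hτ : τ.re < 0) {M N : ℕ} (ℓ : Fin N → ℂ) (k : Fin M → Fin N)
    (r : Fin N) (t : Fin N → ℂ) :
    PhiF τ η ξp ξm ℓ k (fun s => t s + if s = r then τ else 0) =
      phiC η ξp ξm ℓ k r * PhiF τ η ξp ξm ℓ k t := by
  have hφ : phiC η ξp ξm ℓ k r ≠ 0 := by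
    unfold phiC
    exact mul_ne_zero (Finset.prod_ne_zero_iff.2 fun i _ => exp_ne_zero _) (exp_ne_zero _)
  unfold PhiF
  rw [prod_shift Finset.univ r _
    (fun r => theta (qsq τ) (exp (2 * t r)) / theta (qsq τ) (phiC η ξp ξm ℓ k r * exp (2 * t r)))
    (phiC η ξp ξm ℓ k r)]
  · simp
  · intro s hs; simp [hs]
  · simp only [if_true]
    have e : exp (2 * (t r + τ)) = qsq τ * exp (2 * t r) := by
      unfold qsq; rw [← exp_add]; ring_nf
    have hE := exp_ne_zero (2 * t r)
    rw [e, mul_left_comm, theta_step _ _ (norm_qsq τ hτ) (exp_ne_zero _) hE,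
      theta_step _ _ (norm_qsq τ hτ) (exp_ne_zero _) (mul_ne_zero hφ hE), mul_div_mul_comm]
    congr 1
    field_simp

lemma F_shift (τ η : ℂ) (hτ : τ.re < 0) {N : ℕ} (ℓ : Fin N → ℂ)
    (r : Fin N) (x : ℂ) (t : Fin N → ℂ) :
    Ffun τ η ℓ x (fun s => t s + if s = r then τ else 0) =
      (exp (4 * ℓ r * η) * ((sinh (t r + x - ℓ r * η + τ) * sinh (t r - x - ℓ r * η + τ)) /
          (sinh (t r + x + ℓ r * η + τ) * sinh (t r - x + ℓ r * η + τ)))) * Ffun τ η ℓ x t := by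
  unfold Ffun
  rw [prod_shift Finset.univ r _
    (fun s => (poch (qsq τ) (exp (-2 * (t s + x - ℓ s * η))) *
        poch (qsq τ) (exp (-2 * (t s - x - ℓ s * η)))) /
       (poch (qsq τ) (exp (-2 * (t s + x + ℓ s * η))) *
        poch (qsq τ) (exp (-2 * (t s - x + ℓ s * η)))))
    (exp (4 * ℓ r * η) * ((sinh (t r + x - ℓ r * η + τ) * sinh (t r - x - ℓ r * η + τ)) /
          (sinh (t r + x + ℓ r * η + τ) * sinh (t r - x + ℓ r * η + τ))))]
  · simp
  · intro s hs; simp [hs]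
  · simp only [if_true]
    have e1 : t r + τ + x - ℓ r * η = (t r + x - ℓ r * η) + τ := by ring
    have e2 : t r + τ - x - ℓ r * η = (t r - x - ℓ r * η) + τ := by ring
    have e3 : t r + τ + x + ℓ r * η = (t r + x + ℓ r * η) + τ := by ring
    have e4 : t r + τ - x + ℓ r * η = (t r - x + ℓ r * η) + τ := by ring
    rw [e1, e2, e3, e4, poch_down _ _ hτ, poch_down _ _ hτ, poch_down _ _ hτ, poch_down _ _ hτ]
    have hE : exp (-(t r + x - ℓ r * η + τ)) * exp (-(t r - x - ℓ r * η + τ)) =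
        exp (4 * ℓ r * η) *
          (exp (-(t r + x + ℓ r * η + τ)) * exp (-(t r - x + ℓ r * η + τ))) := by
      simp only [← exp_add]; ring_nf
    have h3 := exp_ne_zero (-(t r + x + ℓ r * η + τ))
    have h4 := exp_ne_zero (-(t r - x + ℓ r * η + τ))
    generalize exp (-(t r + x + ℓ r * η + τ)) = a3 at *
    generalize exp (-(t r - x + ℓ r * η + τ)) = a4 at *
    generalize exp (-(t r + x - ℓ r * η + τ)) = a1 at *
    generalize exp (-(t r - x - ℓ r * η + τ)) = a2 at *
    generalize sinh (t r + x - ℓ r * η + τ) = s1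
    generalize sinh (t r - x - ℓ r * η + τ) = s2
    generalize sinh (t r + x + ℓ r * η + τ) = s3
    generalize sinh (t r - x + ℓ r * η + τ) = s4
    generalize poch (qsq τ) (exp (-2 * (t r + x - ℓ r * η))) = p1
    generalize poch (qsq τ) (exp (-2 * (t r - x - ℓ r * η))) = p2
    generalize poch (qsq τ) (exp (-2 * (t r + x + ℓ r * η))) = p3
    generalize poch (qsq τ) (exp (-2 * (t r - x + ℓ r * η))) = p4
    have g1 : 2 * a1 * s1 * p1 * (2 * a2 * s2 * p2) =
        (4 * (a3 * a4)) * (exp (4 * ℓ r * η) * (s1 * s2) * (p1 * p2)) := by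
      linear_combination 4 * s1 * p1 * s2 * p2 * hE
    have g2 : 2 * a3 * s3 * p3 * (2 * a4 * s4 * p4) =
        (4 * (a3 * a4)) * ((s3 * s4) * (p3 * p4)) := by ring
    rw [g1, g2, mul_div_mul_left _ _ (by simp [h3, h4]), mul_div_mul_comm, mul_div_assoc]

lemma u_shift (τ η ξp ξm : ℂ) (hτ : τ.re < 0) {M N : ℕ} (ℓ : Fin N → ℂ) (k : Fin M → Fin N)
    (i : Fin M) (r : Fin N) (x : ℂ) (t : Fin N → ℂ) :
    ufun τ η ξp ξm ℓ k i x (fun s => t s + if s = r then τ else 0) =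
      (if k i = r then exp (2 * (ξp + ξm - η) +
          4 * ((∑ s ∈ Finset.univ.filter fun s : Fin N => r < s, ℓ s) - (M : ℂ) + ((i : ℕ) + 1)) * η)
        else if k i < r then exp (-4 * ℓ r * η) else 1) * ufun τ η ξp ξm ℓ k i x t := by
  have hnum : ∏ s ∈ Finset.univ.filter fun s : Fin N => k i < s,
      theta (qsq τ) (exp (2 * (x - (t s + if s = r then τ else 0) - ℓ s * η))) =
      (if k i < r then -exp (2 * (x - t r - ℓ r * η - τ)) else 1) *
      ∏ s ∈ Finset.univ.filter fun s : Fin N => k i < s,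
      theta (qsq τ) (exp (2 * (x - t s - ℓ s * η))) := by
    rw [prod_shift _ r _ (fun s => theta (qsq τ) (exp (2 * (x - t s - ℓ s * η))))
      (-exp (2 * (x - t r - ℓ r * η - τ)))]
    · simp
    · intro s hs; simp [hs]
    · rw [← theta_down _ _ hτ]; simp only [if_true]; ring_nf
  have hden : ∏ s ∈ Finset.univ.filter fun s : Fin N => k i ≤ s,
      theta (qsq τ) (exp (2 * (x - (t s + if s = r then τ else 0) + ℓ s * η))) =
      (if k i ≤ r then -exp (2 * (x - t r + ℓ r * η - τ)) else 1) *
      ∏ s ∈ Finset.univ.filter fun s : Fin N => k i ≤ s,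
      theta (qsq τ) (exp (2 * (x - t s + ℓ s * η))) := by
    rw [prod_shift _ r _ (fun s => theta (qsq τ) (exp (2 * (x - t s + ℓ s * η))))
      (-exp (2 * (x - t r + ℓ r * η - τ)))]
    · simp
    · intro s hs; simp [hs]
    · rw [← theta_down _ _ hτ]; simp only [if_true]; ring_nf
  unfold ufun
  rw [hnum, hden]
  generalize (∏ s ∈ Finset.univ.filter fun s : Fin N => k i < s,
      theta (qsq τ) (exp (2 * (x - t s - ℓ s * η)))) = A
  generalize (∏ s ∈ Finset.univ.filter fun s : Fin N => k i ≤ s,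
      theta (qsq τ) (exp (2 * (x - t s + ℓ s * η)))) = B
  rcases lt_trichotomy (k i) r with h | h | h
  · simp only [h, h.ne, h.le, if_true, if_false, add_zero]
    generalize theta (qsq τ) (exp (2 * (x - t (k i) + psiC τ η ξp ξm ℓ k i))) = T
    have hE : exp (2 * (x - t r - ℓ r * η - τ)) =
        exp (-4 * ℓ r * η) * exp (2 * (x - t r + ℓ r * η - τ)) := by
      rw [← exp_add]; ring_nf
    have h0 := exp_ne_zero (2 * (x - t r + ℓ r * η - τ))
    rw [hE]
    generalize exp (2 * (x - t r + ℓ r * η - τ)) = a at *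
    rw [show exp (-t (k i)) * T * (-(exp (-4 * ℓ r * η) * a) * A) =
      (-a) * (exp (-4 * ℓ r * η) * (exp (-t (k i)) * T * A)) by ring,
      mul_div_mul_left _ _ (neg_ne_zero.2 h0), mul_div_assoc]
  · have hlt : ¬ k i < r := by simp [h]
    have hle : k i ≤ r := h.le
    simp only [h, lt_irrefl, le_refl, if_true, if_false]
    have e1 : x - (t r + τ) + psiC τ η ξp ξm ℓ k i = (x - t r + psiC τ η ξp ξm ℓ k i) - τ := by
      ring
    rw [e1, theta_down _ _ hτ]
    have hE : exp (-(t r + τ)) * exp (2 * (x - t r + psiC τ η ξp ξm ℓ k i - τ)) =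
        exp (2 * (ξp + ξm - η) +
          4 * ((∑ s ∈ Finset.univ.filter fun s : Fin N => r < s, ℓ s) - (M : ℂ) + ((i : ℕ) + 1)) * η)
        * exp (-t r) * exp (2 * (x - t r + ℓ r * η - τ)) := by
      simp only [← exp_add]
      congr 1
      unfold psiC xiP xiM
      simp only [h]
      ring
    generalize theta (qsq τ) (exp (2 * (x - t r + psiC τ η ξp ξm ℓ k i))) = T
    have h0 := exp_ne_zero (2 * (x - t r + ℓ r * η - τ))
    generalize exp (2 * (x - t r + ℓ r * η - τ)) = a at *
    generalize exp (2 * (x - t r + psiC τ η ξp ξm ℓ k i - τ)) = b at *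
    generalize exp (2 * (ξp + ξm - η) +
          4 * ((∑ s ∈ Finset.univ.filter fun s : Fin N => r < s, ℓ s) - (M : ℂ) + ((i : ℕ) + 1)) * η)
          = c at *
    rw [show exp (-(t r + τ)) * (-b * T) * (1 * A) =
      (-a) * (c * (exp (-t r) * T * A)) by linear_combination -T * A * hE,
      mul_div_mul_left _ _ (neg_ne_zero.2 h0), mul_div_assoc]
  · simp [h.not_gt, h.ne', h.not_ge]

lemma const_cancel (η ξp ξm : ℂ) {M N : ℕ} (ℓ : Fin N → ℂ) (k : Fin M → Fin N) (r : Fin N) :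
    phiC η ξp ξm ℓ k r * ∏ i : Fin M, (exp (4 * ℓ r * η) *
      (if k i = r then exp (2 * (ξp + ξm - η) +
          4 * ((∑ s ∈ Finset.univ.filter fun s : Fin N => r < s, ℓ s) - (M : ℂ) + ((i : ℕ) + 1)) * η)
        else if k i < r then exp (-4 * ℓ r * η) else 1)) = 1 := by
  have hsum : (∑ s ∈ Finset.univ.filter fun s : Fin N => r ≤ s, ℓ s) =
      ℓ r + ∑ s ∈ Finset.univ.filter fun s : Fin N => r < s, ℓ s := by
    have : (Finset.univ.filter fun s : Fin N => r ≤ s) =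
        insert r (Finset.univ.filter fun s : Fin N => r < s) := by
      ext s; simp [le_iff_eq_or_lt, eq_comm]
    rw [this, Finset.sum_insert (by simp)]
  have h2 : exp (-4 * ℓ r * η * ((Finset.univ.filter fun i : Fin M => r < k i).card : ℂ)) =
      ∏ i : Fin M, if r < k i then exp (-4 * ℓ r * η) else 1 := by
    rw [← Finset.prod_filter, Finset.prod_const, ← exp_nat_mul, mul_comm]
  unfold phiC
  rw [h2, Finset.prod_filter, ← Finset.prod_mul_distrib, ← Finset.prod_mul_distrib, hsum]
  apply Finset.prod_eq_one
  intro i _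
  rcases lt_trichotomy (k i) r with h | h | h
  · simp only [h, h.ne, h.not_gt, if_true, if_false, one_mul, ← exp_add]
    rw [← exp_zero]; ring_nf
  · simp only [h, lt_irrefl, if_true, if_false, mul_one, ← exp_add]
    rw [← exp_zero]; ring_nf
  · simp only [h, h.ne', h.not_gt, if_true, if_false, one_mul, mul_one, ← exp_add]
    rw [← exp_zero]; ring_nf

/-- functional equation `w_k(x; t + τ e_r) = (⋯) w_k(x;t)`. -/
theorem stmt11 (τ η ξp ξm : ℂ) (hτ : τ.re < 0) (M N : ℕ) (hN : 1 ≤ N)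
    (ℓ : Fin N → ℂ) (k : Fin M → Fin N) (hk : Monotone k) (r : Fin N)
    (x : Fin M → ℂ) (t : Fin N → ℂ)
    (hw : w0DenomOK τ η ξp ξm ℓ k x t)
    (hw' : w0DenomOK τ η ξp ξm ℓ k x (fun s => t s + if s = r then τ else 0))
    (hΦ : PhiDenomOK τ η ξp ξm ℓ k t)
    (hΦ' : PhiDenomOK τ η ξp ξm ℓ k (fun s => t s + if s = r then τ else 0))
    (hrhs : ∀ i : Fin M,
      sinh (t r + x i + ℓ r * η + τ) ≠ 0 ∧ sinh (t r - x i + ℓ r * η + τ) ≠ 0) :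
    wfun τ η ξp ξm ℓ k x (fun s => t s + if s = r then τ else 0) =
      (∏ i, (sinh (t r + x i - ℓ r * η + τ) * sinh (t r - x i - ℓ r * η + τ)) /
          (sinh (t r + x i + ℓ r * η + τ) * sinh (t r - x i + ℓ r * η + τ))) *
        wfun τ η ξp ξm ℓ k x t := by
  have hc := const_cancel η ξp ξm ℓ k r
  unfold wfun w0
  rw [phi_shift τ η ξp ξm hτ]
  simp only [F_shift τ η hτ, u_shift τ η ξp ξm hτ]
  simp only [Finset.prod_mul_distrib] at hc ⊢
  linear_combination (PhiF τ η ξp ξm ℓ k t *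
    (∏ i, (sinh (t r + x i - ℓ r * η + τ) * sinh (t r - x i - ℓ r * η + τ)) /
          (sinh (t r + x i + ℓ r * η + τ) * sinh (t r - x i + ℓ r * η + τ))) *
    ((∏ i, Ffun τ η ℓ (x i) t) * (∏ i, gfun τ η ξp ξm (x i)) *
      ∏ i, ufun τ η ξp ξm ℓ k i (x i) t) *
    ((∏ p ∈ Finset.univ.filter fun p : Fin M × Fin M => p.1 < p.2, hfun τ η (x p.1 + x p.2)) *
      ∏ p ∈ Finset.univ.filter fun p : Fin M × Fin M => p.1 < p.2, hfun τ η (x p.1 - x p.2))) * hc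

end BQKZ
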